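/- Let N ≥ 1 and let F : [0,1] → ℝ ∪ {-∞} be admissible. Assume there exists t > 0 such that the Gauss kernel G(·,t) is F-concave in ℝ^N. Then every bounded nonnegative function u on ℝ^N that is 2-logconcave in ℝ^N is also F-concave in ℝ^N; that is, C[L₂] ⊆ C[F]. -/

import Mathlib

open MeasureTheory Real

/-- `L_α(s) = -(-log s)^{1/α}` for `s > 0`, and `-∞` for `s ≤ 0`, as an `EReal`-valued
function. -/
noncomputable def Lfun (α : ℝ) (s : ℝ) : EReal :=
  if 0 < s then (((-((-Real.log s) ^ (1 / α))) : ℝ) : EReal) else ⊥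

/-- Concavity of an `(ℝ ∪ {-∞})`-valued function on the whole space, with the conventions
`-∞ + a = -∞` and `-∞ ≥ -∞`. -/
def ERealConcaveOn {E : Type*} [AddCommGroup E] [Module ℝ E] (f : E → EReal) : Prop :=
  ∀ x y : E, ∀ μ : ℝ, 0 ≤ μ → μ ≤ 1 →
    ((1 - μ : ℝ) : EReal) * f x + (μ : EReal) * f y ≤ f ((1 - μ) • x + μ • y)

/-- The Gauss kernel `G(x,t) = (4πt)^{-N/2} exp(-|x|²/(4t))`. -/
noncomputable def gauss (N : ℕ) (x : EuclideanSpace ℝ (Fin N)) (t : ℝ) : ℝ :=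
  (4 * Real.pi * t) ^ (-(N : ℝ) / 2) * Real.exp (-‖x‖ ^ 2 / (4 * t))

/-- The heat semigroup `[e^{tΔ}u₀](x) = ∫ G(x-y,t) u₀(y) dy` on `ℝ^N`. -/
noncomputable def heatSol (N : ℕ) (u₀ : EuclideanSpace ℝ (Fin N) → ℝ) (t : ℝ)
    (x : EuclideanSpace ℝ (Fin N)) : ℝ :=
  ∫ y, gauss N (x - y) t * u₀ y

/-- `u` is `α`-logconcave in `ℝ^N`: for all sufficiently small `κ > 0`, the function
`x ↦ L_α(κ u(x))` is concave as an `(ℝ ∪ {-∞})`-valued function. -/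
def AlphaLogConcave {N : ℕ} (α : ℝ) (u : EuclideanSpace ℝ (Fin N) → ℝ) : Prop :=
  ∃ κ₀ : ℝ, 0 < κ₀ ∧ ∀ κ : ℝ, 0 < κ → κ ≤ κ₀ →
    ERealConcaveOn (fun x => Lfun α (κ * u x))

/-- `F : [0,1] → ℝ ∪ {-∞}` is admissible: strictly increasing and continuous on `(0,1]`,
`F(0) = -∞`, and `F(s) ≠ -∞` for `s ∈ (0,1]`. -/
def Admissible (F : ℝ → EReal) : Prop :=
  StrictMonoOn F (Set.Ioc (0 : ℝ) 1) ∧ ContinuousOn F (Set.Ioc (0 : ℝ) 1) ∧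
    F 0 = ⊥ ∧ ∀ s : ℝ, 0 < s → s ≤ 1 → F s ≠ ⊥

/-- `u` is `F`-concave in `ℝ^N`: for all sufficiently small `κ > 0`, one has
`0 ≤ κ u ≤ 1` and `x ↦ F(κ u(x))` is concave as an `(ℝ ∪ {-∞})`-valued function. -/
def FConcave {N : ℕ} (F : ℝ → EReal) (u : EuclideanSpace ℝ (Fin N) → ℝ) : Prop :=
  ∃ κ₀ : ℝ, 0 < κ₀ ∧ ∀ κ : ℝ, 0 < κ → κ ≤ κ₀ →
    (∀ x, 0 ≤ κ * u x ∧ κ * u x ≤ 1) ∧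
    ∀ x y : EuclideanSpace ℝ (Fin N), ∀ μ : ℝ, 0 ≤ μ → μ ≤ 1 →
      ((1 - μ : ℝ) : EReal) * F (κ * u x) + (μ : EReal) * F (κ * u y) ≤
        F (κ * u ((1 - μ) • x + μ • y))

/-- The zero extension of a function `u` on `Ω` to all of `ℝ^N`. -/
noncomputable def zeroExt {N : ℕ} (Ω : Set (EuclideanSpace ℝ (Fin N)))
    (u : EuclideanSpace ℝ (Fin N) → ℝ) : EuclideanSpace ℝ (Fin N) → ℝ :=
  Ω.indicator u

/-- Concavity of an `(ℝ ∪ {-∞})`-valued function on a convex set `Ω`. -/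
def ERealConcaveOnSet {E : Type*} [AddCommGroup E] [Module ℝ E]
    (Ω : Set E) (f : E → EReal) : Prop :=
  ∀ x ∈ Ω, ∀ y ∈ Ω, ∀ μ : ℝ, 0 ≤ μ → μ ≤ 1 →
    ((1 - μ : ℝ) : EReal) * f x + (μ : EReal) * f y ≤ f ((1 - μ) • x + μ • y)

/-!
Along a line through the origin, and up to scaling, the Gauss kernel is `s ↦ exp (-s²)`, so the
hypothesis says that `φ s = F (a * exp (-s²))` is concave for some `0 < a ≤ 1`. It is also
nonincreasing for `s ≥ 0`. If `v` is 2-logconcave, then `w = √(-log v)` is convex and nonnegative,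
hence `F (a * v) = φ ∘ w` is concave. The same argument works with any exponent `α > 0` in place
of `2`.
-/

section ERealConcave

variable {E E' : Type*} [AddCommGroup E] [Module ℝ E] [AddCommGroup E'] [Module ℝ E']
  {f : E → EReal}

theorem ERealConcaveOn.of_forall_ne_bot
    (h : ∀ x y : E, f x ≠ ⊥ → f y ≠ ⊥ → ∀ μ : ℝ, 0 < μ → μ < 1 →
      ((1 - μ : ℝ) : EReal) * f x + (μ : EReal) * f y ≤ f ((1 - μ) • x + μ • y)) :
    ERealConcaveOn f := by
  intro x y μ hμ₀ hμ₁
  rcases hμ₀.eq_or_lt with rfl | hμ₀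
  · simp
  rcases hμ₁.eq_or_lt with rfl | hμ₁
  · simp
  by_cases hx : f x = ⊥
  · rw [hx, EReal.coe_mul_bot_of_pos (sub_pos.2 hμ₁), EReal.bot_add]
    exact bot_le
  by_cases hy : f y = ⊥
  · rw [hy, EReal.coe_mul_bot_of_pos hμ₀, EReal.add_bot]
    exact bot_le
  exact h x y hx hy μ hμ₀ hμ₁

theorem ERealConcaveOn.comp_linearMap (hf : ERealConcaveOn f) (g : E' →ₗ[ℝ] E) :
    ERealConcaveOn (f ∘ g) := by
  intro x y μ hμ₀ hμ₁
  simpa using hf (g x) (g y) μ hμ₀ hμ₁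

theorem ERealConcaveOn.concaveOnSet (hf : ERealConcaveOn f) (Ω : Set E) :
    ERealConcaveOnSet Ω f :=
  fun x _ y _ => hf x y

end ERealConcave

theorem Lfun_of_pos (α : ℝ) {s : ℝ} (hs : 0 < s) :
    Lfun α s = ((-(-log s) ^ (1 / α) : ℝ) : EReal) :=
  if_pos hs

theorem Lfun_of_nonpos (α : ℝ) {s : ℝ} (hs : s ≤ 0) : Lfun α s = ⊥ :=
  if_neg hs.not_gt

theorem exp_neg_rpow_one_div_rpow_neg_log {α s : ℝ} (hα : α ≠ 0) (hs₀ : 0 < s) (hs₁ : s ≤ 1) :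
    exp (-((-log s) ^ (1 / α)) ^ α) = s := by
  rw [one_div, rpow_inv_rpow (neg_nonneg.2 (log_nonpos hs₀.le hs₁)) hα, neg_neg, exp_log hs₀]

theorem antitoneOn_comp_mul_exp_neg_rpow {β : Type*} [Preorder β] {F : ℝ → β} {a α : ℝ}
    (hF : MonotoneOn F (Set.Ioc 0 1)) (ha : a ∈ Set.Ioc 0 1) (hα : 0 ≤ α) :
    AntitoneOn (fun s => F (a * exp (-s ^ α))) (Set.Ici 0) := by
  have mem_Ioc {s : ℝ} (hs : 0 ≤ s) : a * exp (-s ^ α) ∈ Set.Ioc 0 1 :=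
    ⟨mul_pos ha.1 (exp_pos _), mul_le_one₀ ha.2 (exp_pos _).le
      (exp_le_one_iff.2 (neg_nonpos.2 (rpow_nonneg hs α)))⟩
  intro s (hs : 0 ≤ s) r (hr : 0 ≤ r) hsr
  refine hF (mem_Ioc hr) (mem_Ioc hs) ?_
  have := ha.1.le
  gcongr

section Composition

variable {E : Type*} [AddCommGroup E] [Module ℝ E] {F : ℝ → EReal} {v : E → ℝ} {a α : ℝ}

theorem ERealConcaveOn.pos_of_Lfun (hv : ERealConcaveOn fun x => Lfun α (v x)) {x y : E}
    (hx : 0 < v x) (hy : 0 < v y) {μ : ℝ} (hμ₀ : 0 ≤ μ) (hμ₁ : μ ≤ 1) :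
    0 < v ((1 - μ) • x + μ • y) := by
  by_contra! hz
  have h := hv x y μ hμ₀ hμ₁
  simp only [Lfun_of_pos α hx, Lfun_of_pos α hy, Lfun_of_nonpos α hz] at h
  norm_cast at h

theorem ERealConcaveOn.rpow_neg_log_le (hv : ERealConcaveOn fun x => Lfun α (v x)) {x y : E}
    (hx : 0 < v x) (hy : 0 < v y) {μ : ℝ} (hμ₀ : 0 ≤ μ) (hμ₁ : μ ≤ 1) :
    (-log (v ((1 - μ) • x + μ • y))) ^ (1 / α) ≤
      (1 - μ) * (-log (v x)) ^ (1 / α) + μ * (-log (v y)) ^ (1 / α) := by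
  have h := hv x y μ hμ₀ hμ₁
  simp only [Lfun_of_pos α hx, Lfun_of_pos α hy, Lfun_of_pos α (hv.pos_of_Lfun hx hy hμ₀ hμ₁)] at h
  norm_cast at h
  linarith

theorem ERealConcaveOn.comp_mul_of_Lfun (hF : MonotoneOn F (Set.Ioc 0 1)) (hF₀ : F 0 = ⊥)
    (hα : 0 < α) (ha : a ∈ Set.Ioc 0 1)
    (hφ : ERealConcaveOnSet (Set.Ici 0) fun s => F (a * exp (-s ^ α)))
    (hv : ERealConcaveOn fun x => Lfun α (v x)) (hv₀₁ : ∀ x, v x ∈ Set.Icc 0 1) :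
    ERealConcaveOn fun x => F (a * v x) := by
  have v_pos {x : E} (hx : F (a * v x) ≠ ⊥) : 0 < v x :=
    (hv₀₁ x).1.lt_of_ne' fun h => hx (by rw [h, mul_zero, hF₀])
  set φ : ℝ → EReal := fun s => F (a * exp (-s ^ α)) with hφ_def
  set w : E → ℝ := fun x => (-log (v x)) ^ (1 / α) with hw_def
  have w_nonneg (x : E) : 0 ≤ w x :=
    rpow_nonneg (neg_nonneg.2 (log_nonpos (hv₀₁ x).1 (hv₀₁ x).2)) _
  have φ_w {x : E} (hx : 0 < v x) : φ (w x) = F (a * v x) := by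
    simp only [hφ_def, hw_def, exp_neg_rpow_one_div_rpow_neg_log hα.ne' hx (hv₀₁ x).2]
  refine .of_forall_ne_bot fun x y hx hy μ hμ₀ hμ₁ => ?_
  have hx := v_pos hx
  have hy := v_pos hy
  set z := (1 - μ) • x + μ • y
  have hz : 0 < v z := hv.pos_of_Lfun hx hy hμ₀.le hμ₁.le
  have w_convex : w z ≤ (1 - μ) * w x + μ * w y := hv.rpow_neg_log_le hx hy hμ₀.le hμ₁.le
  calc ((1 - μ : ℝ) : EReal) * F (a * v x) + μ * F (a * v y)
      = ((1 - μ : ℝ) : EReal) * φ (w x) + μ * φ (w y) := by rw [φ_w hx, φ_w hy]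
    _ ≤ φ ((1 - μ) * w x + μ * w y) :=
        hφ (w x) (w_nonneg x) (w y) (w_nonneg y) μ hμ₀.le hμ₁.le
    _ ≤ φ (w z) :=
        antitoneOn_comp_mul_exp_neg_rpow hF ha hα.le (w_nonneg z)
          ((w_nonneg z).trans w_convex) w_convex
    _ = F (a * v z) := φ_w hz

end Composition

theorem FConcave.of_Lfun {N : ℕ} {F : ℝ → EReal} {a α : ℝ} (hF : MonotoneOn F (Set.Ioc 0 1))
    (hF₀ : F 0 = ⊥) (hα : 0 < α) (ha : a ∈ Set.Ioc 0 1)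
    (hφ : ERealConcaveOnSet (Set.Ici 0) fun s => F (a * exp (-s ^ α)))
    {u : EuclideanSpace ℝ (Fin N) → ℝ} (hu : FConcave (Lfun α) u) : FConcave F u := by
  obtain ⟨κ₀, hκ₀, hu⟩ := hu
  refine ⟨a * κ₀, mul_pos ha.1 hκ₀, fun κ hκ hκ_le => ?_⟩
  obtain ⟨hbound, hconcave⟩ := hu (κ / a) (div_pos hκ ha.1) ((div_le_iff₀' ha.1).2 hκ_le)
  have rescale (x : EuclideanSpace ℝ (Fin N)) : κ * u x = a * (κ / a * u x) := by
    rw [← mul_assoc, mul_div_cancel₀ _ ha.1.ne']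
  simp only [rescale]
  exact ⟨fun x => ⟨mul_nonneg ha.1.le (hbound x).1, mul_le_one₀ ha.2 (hbound x).1 (hbound x).2⟩,
    ERealConcaveOn.comp_mul_of_Lfun hF hF₀ hα ha hφ hconcave hbound⟩

theorem gauss_zero_pos (N : ℕ) {t : ℝ} (ht : 0 < t) : 0 < gauss N 0 t := by
  unfold gauss
  positivity

theorem gauss_smul_of_norm_eq_one {N : ℕ} {t : ℝ} (ht : 0 < t) {e : EuclideanSpace ℝ (Fin N)}
    (he : ‖e‖ = 1) (s : ℝ) :
    gauss N (s • (2 * √t) • e) t = gauss N 0 t * exp (-s ^ 2) := by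
  have exponent : -‖s • (2 * √t) • e‖ ^ 2 / (4 * t) = -s ^ 2 := by
    simp only [norm_smul, he, norm_eq_abs, mul_pow, sq_abs, sq_sqrt ht.le]
    field_simp
    norm_num
  simp [gauss, exponent]

theorem FConcave.exists_concaveOnSet_of_gauss {N : ℕ} (hN : 1 ≤ N) {F : ℝ → EReal} {t : ℝ}
    (ht : 0 < t) (hG : FConcave F fun x => gauss N x t) :
    ∃ a ∈ Set.Ioc (0 : ℝ) 1,
      ERealConcaveOnSet (Set.Ici 0) fun s => F (a * exp (-s ^ (2 : ℝ))) := by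
  obtain ⟨κ, hκ, hG⟩ := hG
  obtain ⟨hbound, hconcave⟩ := hG κ hκ le_rfl
  let e : EuclideanSpace ℝ (Fin N) := EuclideanSpace.single ⟨0, hN⟩ 1
  have he : ‖e‖ = 1 := by simp [e]
  refine ⟨κ * gauss N 0 t, ⟨mul_pos hκ (gauss_zero_pos N ht), (hbound 0).2⟩, ?_⟩
  have hline := ERealConcaveOn.comp_linearMap (f := fun x => F (κ * gauss N x t)) hconcave
    (LinearMap.toSpanSingleton ℝ _ ((2 * √t) • e))
  simpa [Function.comp_def, gauss_smul_of_norm_eq_one ht he, mul_assoc]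
    using hline.concaveOnSet (Set.Ici 0)

theorem two_logconcave_implies_Fconcave_general {N M : ℕ} (hN : 1 ≤ N) {F : ℝ → EReal}
    (hF : MonotoneOn F (Set.Ioc 0 1)) (hF₀ : F 0 = ⊥)
    (hG : ∃ t : ℝ, 0 < t ∧ FConcave F (fun x => gauss N x t))
    {u : EuclideanSpace ℝ (Fin M) → ℝ} (hu : FConcave (Lfun 2) u) : FConcave F u := by
  obtain ⟨t, ht, hG⟩ := hG
  obtain ⟨a, ha, hφ⟩ := FConcave.exists_concaveOnSet_of_gauss hN ht hG
  exact .of_Lfun hF hF₀ two_pos ha hφ hu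

/-- Lemma 2.3, first part: If the Gauss kernel `G(·,t)` is `F`-concave in
`ℝ^N` for some `t > 0`, then every 2-logconcave function in `ℝ^N` is `F`-concave. -/
theorem two_logconcave_implies_Fconcave
    (N : ℕ) (hN : 1 ≤ N) (F : ℝ → EReal) (hF : Admissible F)
    (hG : ∃ t : ℝ, 0 < t ∧ FConcave F (fun x => gauss N x t)) :
    ∀ u : EuclideanSpace ℝ (Fin N) → ℝ, FConcave (Lfun 2) u → FConcave F u :=
  fun _ hu => two_logconcave_implies_Fconcave_general hN hF.1.monotoneOn hF.2.2.1 hG hu
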